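/- arXiv:2402.12313 — 2 statements merged into one kernel-verified Lean document; each statement's English description precedes it below -/
import Mathlib

section
/- M^∧(G,Y) is an inverse monoid: the multiplication ((A,g),(B,h)) ↦ ((A ∪ gB)^∧, gh) is well defined (i.e. (A ∪ gB)^∧ ∈ 𝒳_Y^∧ and gh ∈ V((A ∪ gB)^∧)) and associative; (Γ_1^∧, 1) is a two-sided identity; every s = (A,g) ∈ M^∧(G,Y) satisfies s s⁻¹ s = s and s⁻¹ s s⁻¹ = s⁻¹, where s⁻¹ := (g⁻¹A, g⁻¹) ∈ M^∧(G,Y); and any two idempotents of M^∧(G,Y) commute. -/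
namespace FInvPaper

/-- The extended alphabet `Y = X ⊔ Ḡ`, with `Ḡ` a bijective copy of `G`. -/
abbrev YT (X G : Type*) := X ⊕ G

/-- The extension `ι_Y : Y → G` of the assignment map `ι : X → G`. -/
def iotaY {X G : Type*} (ι : X → G) : YT X G → G := Sum.elim ι id

/-- A (candidate) subgraph of `Cay(G,Y)`: a set of vertices together with a set
of positive edges, an edge `(a, y)` joining `a` to `a * ι_Y y`. -/
abbrev Graph (X G : Type*) := Set G × Set (G × YT X G)

variable {X G : Type*} [Group G]

/-- `Γ` is a finite subgraph of `Cay(G,Y)` containing the origin. -/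
def IsSubgraph (ι : X → G) (Γ : Graph X G) : Prop :=
  Γ.1.Finite ∧ Γ.2.Finite ∧ (1 : G) ∈ Γ.1 ∧
    ∀ e ∈ Γ.2, e.1 ∈ Γ.1 ∧ e.1 * iotaY ι e.2 ∈ Γ.1

/-- The relation on vertices given by the positive edges of `Γ`. -/
def edgeRel (ι : X → G) (Γ : Graph X G) (a b : G) : Prop :=
  ∃ y : YT X G, (a, y) ∈ Γ.2 ∧ b = a * iotaY ι y

/-- `Γ` is connected: every vertex is related to the origin `1` by the
equivalence relation generated by the edge relation. -/
def IsConn (ι : X → G) (Γ : Graph X G) : Prop :=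
  ∀ v ∈ Γ.1, Relation.EqvGen (edgeRel ι Γ) 1 v

/-- `𝒳_Y`: all finite connected subgraphs of `Cay(G,Y)` containing the origin. -/
def XY (ι : X → G) : Set (Graph X G) :=
  {Γ | IsSubgraph ι Γ ∧ IsConn ι Γ}

/-- The translate `gΓ`. -/
def gmul (g : G) (Γ : Graph X G) : Graph X G :=
  ((g * ·) '' Γ.1, (fun e => (g * e.1, e.2)) '' Γ.2)

/-- Componentwise union of graphs. -/
def gunion (Γ Δ : Graph X G) : Graph X G := (Γ.1 ∪ Δ.1, Γ.2 ∪ Δ.2)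

/-- Componentwise inclusion of graphs. -/
def gsub (Γ Δ : Graph X G) : Prop := Γ.1 ⊆ Δ.1 ∧ Γ.2 ⊆ Δ.2

/-- The closure `Γ^∧` of `Γ`: add the edge `(a, \overline{a⁻¹b})` for all
vertices `a, b` of `Γ`. -/
def clo (Γ : Graph X G) : Graph X G :=
  (Γ.1, Γ.2 ∪ {e : G × YT X G | ∃ a ∈ Γ.1, ∃ b ∈ Γ.1, e = (a, Sum.inr (a⁻¹ * b))})

/-- `Γ` is closed. -/
def IsClosedGr (Γ : Graph X G) : Prop :=
  ∀ a ∈ Γ.1, ∀ b ∈ Γ.1, (a, (Sum.inr (a⁻¹ * b) : YT X G)) ∈ Γ.2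

/-- `𝒳_Y^∧`: all closed graphs in `𝒳_Y`. -/
def XYw (ι : X → G) : Set (Graph X G) := {Γ | Γ ∈ XY ι ∧ IsClosedGr Γ}

/-- The graph `Γ_1` with single vertex `1` and no edges. -/
def gammaOne : Graph X G := ({1}, ∅)

/-- The graph `Γ_x` for `x ∈ X`. -/
def gammaX (ι : X → G) (x : X) : Graph X G :=
  ({1, ι x}, {((1 : G), (Sum.inl x : YT X G))})

/-- The graph `Γ_ḡ` for `g ∈ G`. -/
def gammaBar (g : G) : Graph X G :=
  ({1, g}, {((1 : G), (Sum.inr g : YT X G))})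

/-- Raw elements: pairs `(Γ, g)`. -/
abbrev Elt (X G : Type*) := Graph X G × G

/-- The carrier of `M(G,Y)`. -/
def Mset (ι : X → G) : Set (Elt X G) := {p | p.1 ∈ XY ι ∧ p.2 ∈ p.1.1}

/-- Multiplication of `M(G,Y)`: `(A,g)(B,h) = (A ∪ gB, gh)`. -/
def mulM (p q : Elt X G) : Elt X G := (gunion p.1 (gmul p.2 q.1), p.2 * q.2)

/-- Inversion: `(A,g)⁻¹ = (g⁻¹A, g⁻¹)`. -/
def invM (p : Elt X G) : Elt X G := (gmul p.2⁻¹ p.1, p.2⁻¹)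

/-- The carrier of `M^∧(G,Y)`. -/
def Mwedge (ι : X → G) : Set (Elt X G) := {p | p.1 ∈ XYw ι ∧ p.2 ∈ p.1.1}

/-- Multiplication of `M^∧(G,Y)`: `(A,g)(B,h) = ((A ∪ gB)^∧, gh)`. -/
def mulW (p q : Elt X G) : Elt X G := (clo (gunion p.1 (gmul p.2 q.1)), p.2 * q.2)

/-- Natural partial order of `M^∧(G,Y)`: `s ≤ t` iff `s = s s⁻¹ t`. -/
def nleW (p q : Elt X G) : Prop := p = mulW (mulW p (invM p)) q

/-- Minimum group congruence `σ` of `M^∧(G,Y)`. -/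
def sigmaW (ι : X → G) (p q : Elt X G) : Prop :=
  ∃ u ∈ Mwedge ι, nleW u p ∧ nleW u q

/-- The `m`-operation of `M^∧(G,Y)`: `m(A, g) = (Γ_ḡ^∧, g)`. -/
def mW (p : Elt X G) : Elt X G := (clo (gammaBar p.2), p.2)

/-- Natural partial order of `M(G,Y)`. -/
def nleM (p q : Elt X G) : Prop := p = mulM (mulM p (invM p)) q

/-- Minimum group congruence `σ` of `M(G,Y)`. -/
def sigmaM (ι : X → G) (p q : Elt X G) : Prop :=
  ∃ u ∈ Mset ι, nleM u p ∧ nleM u q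

end FInvPaper

namespace FInvPaper

section Helpers

variable {X G : Type*} [Group G]

theorem gmul_one (A : Graph X G) : gmul 1 A = A := by
  simp [gmul]

theorem gmul_gmul (g h : G) (A : Graph X G) : gmul g (gmul h A) = gmul (g * h) A := by
  simp only [gmul, Set.image_image, mul_assoc]

theorem gmul_gunion (g : G) (A B : Graph X G) :
    gmul g (gunion A B) = gunion (gmul g A) (gmul g B) := by
  simp [gmul, gunion, Set.image_union]

theorem gunion_assoc (A B C : Graph X G) :
    gunion (gunion A B) C = gunion A (gunion B C) := by
  simp [gunion, Set.union_assoc]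

theorem gunion_comm (A B : Graph X G) : gunion A B = gunion B A := by
  simp [gunion, Set.union_comm]

theorem gunion_self (A : Graph X G) : gunion A A = A := by
  simp [gunion]

theorem clo_of_closed {A : Graph X G} (h : IsClosedGr A) : clo A = A := by
  refine Prod.ext rfl ?_
  refine Set.union_eq_left.2 ?_
  rintro e ⟨a, ha, b, hb, rfl⟩
  exact h a ha b hb

theorem clo_closed (A : Graph X G) : IsClosedGr (clo A) :=
  fun a ha b hb => Or.inr ⟨a, ha, b, hb, rfl⟩

theorem clo_gunion_clo_left (A B : Graph X G) :
    clo (gunion (clo A) B) = clo (gunion A B) := by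
  refine Prod.ext rfl ?_
  ext e
  constructor
  · rintro (((h | ⟨a, ha, b, hb, rfl⟩) | h) | h)
    · exact Or.inl (Or.inl h)
    · exact Or.inr ⟨a, Or.inl ha, b, Or.inl hb, rfl⟩
    · exact Or.inl (Or.inr h)
    · exact Or.inr h
  · rintro ((h | h) | h)
    · exact Or.inl (Or.inl (Or.inl h))
    · exact Or.inl (Or.inr h)
    · exact Or.inr h

theorem clo_gunion_clo_right (A B : Graph X G) :
    clo (gunion A (clo B)) = clo (gunion A B) := by
  rw [gunion_comm, clo_gunion_clo_left, gunion_comm]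

theorem gmul_clo (g : G) (A : Graph X G) : gmul g (clo A) = clo (gmul g A) := by
  refine Prod.ext rfl ?_
  ext e
  constructor
  · rintro ⟨e, h | ⟨a, ha, b, hb, rfl⟩, rfl⟩
    · exact Or.inl ⟨e, h, rfl⟩
    · exact Or.inr ⟨g * a, ⟨a, ha, rfl⟩, g * b, ⟨b, hb, rfl⟩, by simp [mul_assoc]⟩
  · rintro (⟨e, h, rfl⟩ | ⟨_, ⟨a, ha, rfl⟩, _, ⟨b, hb, rfl⟩, rfl⟩)
    · exact ⟨e, Or.inl h, rfl⟩
    · exact ⟨(a, Sum.inr (a⁻¹ * b)), Or.inr ⟨a, ha, b, hb, rfl⟩, by simp [mul_assoc]⟩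

theorem gmul_closed (g : G) {A : Graph X G} (h : IsClosedGr A) : IsClosedGr (gmul g A) := by
  rw [← clo_of_closed h, gmul_clo]
  exact clo_closed _

theorem mem_XYw {ι : X → G} {A : Graph X G} (h : IsSubgraph ι A) (hc : IsClosedGr A) :
    A ∈ XYw ι := by
  refine ⟨⟨h, fun v hv => Relation.EqvGen.rel _ _ ?_⟩, hc⟩
  exact ⟨_, hc 1 h.2.2.1 v hv, by simp [iotaY]⟩

theorem clo_subgraph {ι : X → G} {A : Graph X G} (h : IsSubgraph ι A) :
    IsSubgraph ι (clo A) := by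
  obtain ⟨h1, h2, h3, h4⟩ := h
  refine ⟨h1, h2.union ?_, h3, ?_⟩
  · refine ((h1.prod h1).image
      (fun p : G × G => ((p.1, Sum.inr (p.1⁻¹ * p.2)) : G × YT X G))).subset ?_
    rintro e ⟨a, ha, b, hb, rfl⟩
    exact ⟨(a, b), ⟨ha, hb⟩, rfl⟩
  · rintro e (h | ⟨a, ha, b, hb, rfl⟩)
    · exact h4 e h
    · exact ⟨ha, by simpa [iotaY, clo] using hb⟩

theorem gmul_edge {ι : X → G} {A : Graph X G} (h : IsSubgraph ι A) (g : G) :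
    ∀ e ∈ (gmul g A).2, e.1 ∈ (gmul g A).1 ∧ e.1 * iotaY ι e.2 ∈ (gmul g A).1 := by
  rintro _ ⟨e, he, rfl⟩
  exact ⟨⟨_, (h.2.2.2 e he).1, rfl⟩, ⟨_, (h.2.2.2 e he).2, by simp [mul_assoc]⟩⟩

theorem gunion_gmul_subgraph {ι : X → G} {A B : Graph X G} (hA : IsSubgraph ι A)
    (hB : IsSubgraph ι B) (g : G) : IsSubgraph ι (gunion A (gmul g B)) := by
  refine ⟨hA.1.union (hB.1.image _), hA.2.1.union (hB.2.1.image _), Or.inl hA.2.2.1, ?_⟩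
  rintro e (he | he)
  · exact ⟨Or.inl (hA.2.2.2 e he).1, Or.inl (hA.2.2.2 e he).2⟩
  · exact ⟨Or.inr (gmul_edge hB g e he).1, Or.inr (gmul_edge hB g e he).2⟩

theorem gunion_clo_gammaOne {A : Graph X G} (hA : IsClosedGr A) {g : G} (hg : g ∈ A.1) :
    clo (gunion A (gmul g (clo gammaOne))) = A := by
  rw [gmul_clo, clo_gunion_clo_right]
  have : gunion A (gmul g gammaOne) = A := by
    refine Prod.ext ?_ ?_
    · simpa [gunion, gmul, gammaOne] using hg
    · simp [gunion, gmul, gammaOne]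
  rw [this, clo_of_closed hA]

theorem mulW_inv_mulW {A : Graph X G} (hA : IsClosedGr A) (g : G) :
    mulW (mulW (A, g) (invM (A, g))) (A, g) = (A, g) := by
  simp [mulW, invM, gmul_gmul, gmul_one, gunion_self, clo_of_closed hA]

theorem mulW_idem {p : Elt X G} (h : mulW p p = p) : p.2 = 1 := by
  have := congrArg Prod.snd h
  simpa [mulW] using this

end Helpers

/-- `M^∧(G,Y)` is an inverse monoid: the multiplication
`((A,g),(B,h)) ↦ ((A ∪ gB)^∧, gh)` is well defined and associative,
`(Γ_1^∧, 1)` is a two-sided identity, `(A,g)⁻¹ = (g⁻¹A, g⁻¹)` is an inverse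
(`s s⁻¹ s = s` and `s⁻¹ s s⁻¹ = s⁻¹`), and idempotents commute. -/
theorem Mwedge_inverseMonoid {X G : Type*} [Nonempty X] [Group G] (ι : X → G)
    (hgen : Subgroup.closure (Set.range ι) = ⊤) :
    -- well-definedness of the multiplication
    (∀ p q : Elt X G, p ∈ Mwedge ι → q ∈ Mwedge ι →
      (mulW p q).1 ∈ XYw ι ∧ (mulW p q).2 ∈ (mulW p q).1.1) ∧
    -- associativity
    (∀ p q r : Elt X G, p ∈ Mwedge ι → q ∈ Mwedge ι → r ∈ Mwedge ι →
      mulW (mulW p q) r = mulW p (mulW q r)) ∧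
    -- `(Γ_1^∧, 1)` is a two-sided identity
    (∀ p : Elt X G, p ∈ Mwedge ι →
      mulW ((clo gammaOne, 1) : Elt X G) p = p ∧
      mulW p ((clo gammaOne, 1) : Elt X G) = p) ∧
    -- inverses
    (∀ p : Elt X G, p ∈ Mwedge ι → invM p ∈ Mwedge ι ∧
      mulW (mulW p (invM p)) p = p ∧ mulW (mulW (invM p) p) (invM p) = invM p) ∧
    -- idempotents commute
    (∀ p q : Elt X G, p ∈ Mwedge ι → q ∈ Mwedge ι →
      mulW p p = p → mulW q q = q → mulW p q = mulW q p) := by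
  refine ⟨?_, ?_, ?_, ?_, ?_⟩
  · rintro ⟨A, g⟩ ⟨B, h⟩ ⟨hA, hg⟩ ⟨hB, hh⟩
    exact ⟨mem_XYw (clo_subgraph (gunion_gmul_subgraph hA.1.1 hB.1.1 g)) (clo_closed _),
      Or.inr ⟨h, hh, rfl⟩⟩
  · rintro ⟨A, g⟩ ⟨B, h⟩ ⟨C, k⟩ - - -
    simp only [mulW, gmul_clo, gmul_gunion, gmul_gmul, clo_gunion_clo_left,
      clo_gunion_clo_right, gunion_assoc, mul_assoc]
  · rintro ⟨A, g⟩ ⟨hA, hg⟩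
    refine ⟨?_, ?_⟩
    · have := gunion_clo_gammaOne hA.2 hA.1.1.2.2.1
      rw [gmul_one, gunion_comm] at this
      simp [mulW, gmul_one, this]
    · simp [mulW, gunion_clo_gammaOne hA.2 hg]
  · rintro ⟨A, g⟩ ⟨hA, hg⟩
    refine ⟨⟨mem_XYw ⟨hA.1.1.1.image _, hA.1.1.2.1.image _, ⟨g, hg, by simp⟩,
      gmul_edge hA.1.1 _⟩ (gmul_closed _ hA.2), ⟨1, hA.1.1.2.2.1, by simp [invM]⟩⟩,
      mulW_inv_mulW hA.2 g, ?_⟩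
    have := mulW_inv_mulW (gmul_closed g⁻¹ hA.2) g⁻¹
    simpa [invM, gmul_gmul, gmul_one] using this
  · rintro ⟨A, g⟩ ⟨B, h⟩ - - hp hq
    obtain rfl : g = 1 := mulW_idem hp
    obtain rfl : h = 1 := mulW_idem hq
    simp [mulW, gmul_one, gunion_comm A B]

end FInvPaper
end

section
/- Let G be an X-generated group and let S be an E-unitary inverse monoid equipped with a map ι_S : X → S such that S is generated by ι_S(X) under multiplication and inversion, and assume that whenever two words u, v over X ∪ X⁻¹ satisfy [u]_G = [v]_G, the values [u]_S and [v]_S are σ-related in S. Then there exists a monoid homomorphism φ : M(G,X) → S such that φ(s⁻¹) = φ(s)⁻¹ for all s ∈ M(G,X), φ(Γ_x, [x]_G) = ι_S(x) for all x ∈ X, and for every (A,g) ∈ M(G,X) and every word w over X ∪ X⁻¹ with [w]_G = g, φ(A,g) is σ-related to [w]_S. -/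
namespace FInvPaper

/-- A (candidate) subgraph of `Cay(G,X)`. -/
abbrev GraphX (X G : Type*) := Set G × Set (G × X)

variable {X G : Type*} [Group G]

/-- `Γ` is a finite subgraph of `Cay(G,X)` containing the origin. -/
def IsSubgraphX (ι : X → G) (Γ : GraphX X G) : Prop :=
  Γ.1.Finite ∧ Γ.2.Finite ∧ (1 : G) ∈ Γ.1 ∧
    ∀ e ∈ Γ.2, e.1 ∈ Γ.1 ∧ e.1 * ι e.2 ∈ Γ.1

/-- The edge relation of a subgraph of `Cay(G,X)`. -/
def edgeRelX (ι : X → G) (Γ : GraphX X G) (a b : G) : Prop :=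
  ∃ x : X, (a, x) ∈ Γ.2 ∧ b = a * ι x

/-- Connectedness of a subgraph of `Cay(G,X)`. -/
def IsConnX (ι : X → G) (Γ : GraphX X G) : Prop :=
  ∀ v ∈ Γ.1, Relation.EqvGen (edgeRelX ι Γ) 1 v

/-- `𝒳̃_X`: all finite (not necessarily connected) subgraphs of `Cay(G,X)`
containing the origin. -/
def tXX (ι : X → G) : Set (GraphX X G) := {Γ | IsSubgraphX ι Γ}

/-- The translate `gΓ` for subgraphs of `Cay(G,X)`. -/
def gmulX (g : G) (Γ : GraphX X G) : GraphX X G :=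
  ((g * ·) '' Γ.1, (fun e => (g * e.1, e.2)) '' Γ.2)

/-- Componentwise union. -/
def gunionX (Γ Δ : GraphX X G) : GraphX X G := (Γ.1 ∪ Δ.1, Γ.2 ∪ Δ.2)

/-- The carrier of `F(G,X)`. -/
def Fset (ι : X → G) : Set (GraphX X G × G) := {p | p.1 ∈ tXX ι ∧ p.2 ∈ p.1.1}

/-- Multiplication `(A,g)(B,h) = (A ∪ gB, gh)` (used both in `F(G,X)` and `M(G,X)`). -/
def mulMX (p q : GraphX X G × G) : GraphX X G × G :=
  (gunionX p.1 (gmulX p.2 q.1), p.2 * q.2)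

/-- Inversion `(A,g)⁻¹ = (g⁻¹A, g⁻¹)`. -/
def invMX (p : GraphX X G × G) : GraphX X G × G := (gmulX p.2⁻¹ p.1, p.2⁻¹)

/-- Erasing all edges with labels in `Ḡ`: the map `Γ ↦ Γ ∩ Cay(G,X)`. -/
def ff (Γ : Graph X G) : GraphX X G :=
  (Γ.1, {e : G × X | (e.1, (Sum.inl e.2 : YT X G)) ∈ Γ.2})

end FInvPaper
namespace FInvPaper

/-- An inverse monoid: a monoid with an involutive inversion such that
`s s⁻¹ s = s`, `(st)⁻¹ = t⁻¹ s⁻¹`, and idempotents commute. -/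
class InverseMonoid (S : Type*) extends Monoid S, Inv S where
  mul_inv_mul : ∀ s : S, s * s⁻¹ * s = s
  inv_inv : ∀ s : S, s⁻¹⁻¹ = s
  mul_inv_rev : ∀ s t : S, (s * t)⁻¹ = t⁻¹ * s⁻¹
  idem_comm : ∀ e f : S, e * e = e → f * f = f → e * f = f * e

/-- The natural partial order of an inverse monoid: `s ≤ t` iff `s = s s⁻¹ t`. -/
def nle {S : Type*} [InverseMonoid S] (s t : S) : Prop := s = s * s⁻¹ * t

/-- The minimum group congruence `σ`: `s σ t` iff some `u` lies below both. -/
def sigmaRel {S : Type*} [InverseMonoid S] (s t : S) : Prop :=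
  ∃ u : S, nle u s ∧ nle u t

/-- Words over `X ∪ X⁻¹`: lists of signed letters (`true` = positive letter). -/
abbrev Word (X : Type*) := List (X × Bool)

/-- The value of a word under `x ↦ f x`, `x⁻¹ ↦ inv (f x)`;
the empty word has value `1`. -/
def evalWord {X M : Type*} [One M] [Mul M] (f : X → M) (inv : M → M) : Word X → M
  | [] => 1
  | (x, b) :: w => (if b then f x else inv (f x)) * evalWord f inv w

end FInvPaper

namespace FInvPaper

variable {X G : Type*} [Group G]

/-- `𝒳_X`: all finite connected subgraphs of `Cay(G,X)` containing the origin. -/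
def XXc (ι : X → G) : Set (GraphX X G) := {Γ | IsSubgraphX ι Γ ∧ IsConnX ι Γ}

/-- The carrier of the Margolis–Meakin expansion `M(G,X)`. -/
def MsetX (ι : X → G) : Set (GraphX X G × G) := {p | p.1 ∈ XXc ι ∧ p.2 ∈ p.1.1}

/-- The graph `Γ_1` in `Cay(G,X)`. -/
def gammaOneX : GraphX X G := ({1}, ∅)

/-- The graph `Γ_x` in `Cay(G,X)`. -/
def gammaXX (ι : X → G) (x : X) : GraphX X G := ({1, ι x}, {((1 : G), x)})

section helpers

theorem InverseMonoid.idem_mul_inv {S : Type*} [InverseMonoid S] (s : S) :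
    (s * s⁻¹) * (s * s⁻¹) = s * s⁻¹ := by
  rw [← mul_assoc, InverseMonoid.mul_inv_mul]

theorem InverseMonoid.inv_mul_inv {S : Type*} [InverseMonoid S] (s : S) :
    s⁻¹ * s * s⁻¹ = s⁻¹ := by
  have := InverseMonoid.mul_inv_mul s⁻¹
  rwa [InverseMonoid.inv_inv] at this

theorem InverseMonoid.idem_inv_mul {S : Type*} [InverseMonoid S] (s : S) :
    (s⁻¹ * s) * (s⁻¹ * s) = s⁻¹ * s := by
  rw [← mul_assoc, InverseMonoid.inv_mul_inv]

theorem InverseMonoid.inv_of_idem {S : Type*} [InverseMonoid S] (e : S) (he : e * e = e) :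
    e⁻¹ = e := by
  have hi : e⁻¹ * e⁻¹ = e⁻¹ := by rw [← InverseMonoid.mul_inv_rev, he]
  have hc := InverseMonoid.idem_comm (e⁻¹ * e) (e * e⁻¹)
    (InverseMonoid.idem_inv_mul e) (InverseMonoid.idem_mul_inv e)
  calc e⁻¹ = e⁻¹ * e * e⁻¹ := (InverseMonoid.inv_mul_inv e).symm
    _ = e⁻¹ * (e * e) * e⁻¹ := by rw [he]
    _ = (e⁻¹ * e) * (e * e⁻¹) := by simp only [mul_assoc]
    _ = (e * e⁻¹) * (e⁻¹ * e) := hc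
    _ = e * (e⁻¹ * e⁻¹) * e := by simp only [mul_assoc]
    _ = e * e⁻¹ * e := by rw [hi]
    _ = e := InverseMonoid.mul_inv_mul e

/-- Conjugates of idempotents are idempotent. -/
theorem InverseMonoid.conj_idem {S : Type*} [InverseMonoid S] (a f : S) (hf : f * f = f) :
    (a⁻¹ * f * a) * (a⁻¹ * f * a) = a⁻¹ * f * a := by
  calc (a⁻¹ * f * a) * (a⁻¹ * f * a) = a⁻¹ * (f * (a * a⁻¹)) * f * a := by
        simp only [mul_assoc]
    _ = a⁻¹ * ((a * a⁻¹) * f) * f * a := by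
        rw [InverseMonoid.idem_comm f (a * a⁻¹) hf (InverseMonoid.idem_mul_inv a)]
    _ = (a⁻¹ * a * a⁻¹) * (f * f) * a := by simp only [mul_assoc]
    _ = a⁻¹ * f * a := by rw [hf, InverseMonoid.inv_mul_inv]

/-- In an `E`-unitary inverse monoid, `σ`-related elements with the same range coincide. -/
theorem eq_of_sigma {S : Type*} [InverseMonoid S]
    (hE : ∀ e s : S, e * e = e → nle e s → s * s = s)
    (a b f : S) (hf : f * f = f) (hfab : f * a = f * b) (hab : a * a⁻¹ = b * b⁻¹) : a = b := by
  have hh := InverseMonoid.conj_idem a f hf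
  have hid : (a⁻¹ * b) * (a⁻¹ * b) = a⁻¹ * b := by
    apply hE (a⁻¹ * f * a) _ hh
    unfold nle
    rw [InverseMonoid.inv_of_idem _ hh, hh]
    symm
    calc (a⁻¹ * f * a) * (a⁻¹ * b) = a⁻¹ * (f * (a * a⁻¹)) * b := by simp only [mul_assoc]
      _ = a⁻¹ * ((a * a⁻¹) * f) * b := by
        rw [InverseMonoid.idem_comm f (a * a⁻¹) hf (InverseMonoid.idem_mul_inv a)]
      _ = (a⁻¹ * a * a⁻¹) * (f * b) := by simp only [mul_assoc]
      _ = a⁻¹ * f * a := by rw [InverseMonoid.inv_mul_inv, ← hfab, mul_assoc]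
  have hb : b = a * (a⁻¹ * b) := by
    rw [← mul_assoc, hab, InverseMonoid.mul_inv_mul]
  have hinv := InverseMonoid.inv_of_idem _ hid
  have hc := InverseMonoid.idem_comm _ _ hid (InverseMonoid.idem_inv_mul a)
  generalize a⁻¹ * b = i at *
  calc a = a * a⁻¹ * a := (InverseMonoid.mul_inv_mul a).symm
    _ = b * b⁻¹ * a := by rw [hab]
    _ = (a * i) * (i * a⁻¹) * a := by
        rw [hb, InverseMonoid.mul_inv_rev, hinv]
    _ = a * ((i * i) * (a⁻¹ * a)) := by simp only [mul_assoc]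
    _ = a * a⁻¹ * a * i := by rw [hid, hc]; simp only [mul_assoc]
    _ = b := by rw [InverseMonoid.mul_inv_mul, ← hb]

/-- If `e` lies below the ranges of `σ`-related `s` and `t`, then `e s = e t`. -/
theorem restrict_eq {S : Type*} [InverseMonoid S]
    (hE : ∀ e s : S, e * e = e → nle e s → s * s = s)
    (e s t : S) (he : e * e = e) (hs : e * (s * s⁻¹) = e) (ht : e * (t * t⁻¹) = e)
    (hst : sigmaRel s t) : e * s = e * t := by
  obtain ⟨u, hu1, hu2⟩ := hst
  unfold nle at hu1 hu2
  have hf := InverseMonoid.idem_mul_inv u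
  have hfe := InverseMonoid.idem_comm _ _ hf he
  have key : ∀ r : S, e * (r * r⁻¹) = e → (e * r) * (e * r)⁻¹ = e := by
    intro r hr
    rw [InverseMonoid.mul_inv_rev, InverseMonoid.inv_of_idem e he]
    calc e * r * (r⁻¹ * e) = e * (r * r⁻¹) * e := by simp only [mul_assoc]
      _ = e := by rw [hr, he]
  apply eq_of_sigma hE _ _ (u * u⁻¹) hf
  · rw [← mul_assoc, ← mul_assoc, hfe, mul_assoc e, mul_assoc e, ← hu1, ← hu2]
  · rw [key s hs, key t ht]

theorem prefix_le {S : Type*} [InverseMonoid S] (s t : S) :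
    (s * t) * (s * t)⁻¹ * (s * s⁻¹) = (s * t) * (s * t)⁻¹ := by
  rw [InverseMonoid.mul_inv_rev]
  calc s * t * (t⁻¹ * s⁻¹) * (s * s⁻¹) = s * t * t⁻¹ * (s⁻¹ * s * s⁻¹) := by
        simp only [mul_assoc]
    _ = _ := by rw [InverseMonoid.inv_mul_inv]; simp only [mul_assoc]

theorem evalWord_append {X M : Type*} [Monoid M] (f : X → M) (inv : M → M) (u v : Word X) :
    evalWord f inv (u ++ v) = evalWord f inv u * evalWord f inv v := by
  induction u with
  | nil => simp [evalWord]
  | cons c u ih => obtain ⟨x, b⟩ := c; simp [evalWord, ih, mul_assoc]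

variable {X G : Type*} [Group G]

theorem gmulX_one (A : GraphX X G) : gmulX 1 A = A := by
  simp [gmulX]

theorem gmulX_mul (g h : G) (A : GraphX X G) : gmulX g (gmulX h A) = gmulX (g * h) A := by
  simp only [gmulX, Set.image_image, mul_assoc]

theorem gmulX_union (g : G) (A B : GraphX X G) :
    gmulX g (gunionX A B) = gunionX (gmulX g A) (gmulX g B) := by
  simp [gmulX, gunionX, Set.image_union]

theorem gunionX_assoc (A B C : GraphX X G) :
    gunionX (gunionX A B) C = gunionX A (gunionX B C) := by
  simp [gunionX, Set.union_assoc]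

theorem gunionX_comm (A B : GraphX X G) : gunionX A B = gunionX B A := by
  simp [gunionX, Set.union_comm]

theorem gunionX_self (A : GraphX X G) : gunionX A A = A := by
  simp [gunionX]

theorem mulMX_assoc (p q r : GraphX X G × G) :
    mulMX (mulMX p q) r = mulMX p (mulMX q r) := by
  simp [mulMX, gmulX_union, gmulX_mul, gunionX_assoc, mul_assoc]

theorem invMX_mulMX (p q : GraphX X G × G) :
    invMX (mulMX p q) = mulMX (invMX q) (invMX p) := by
  simp [mulMX, invMX, gmulX_union, gmulX_mul, gunionX_comm]

theorem invMX_invMX (p : GraphX X G × G) : invMX (invMX p) = p := by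
  simp [invMX, gmulX_mul, gmulX_one]

theorem mulMX_invMX (p : GraphX X G × G) : mulMX p (invMX p) = (p.1, 1) := by
  simp [mulMX, invMX, gmulX_mul, gmulX_one, gunionX_self]

/-- The element of `M(G,X)` given by a signed letter. -/
def genX (ι : X → G) (c : X × Bool) : GraphX X G × G :=
  if c.2 then (gammaXX ι c.1, ι c.1) else invMX (gammaXX ι c.1, ι c.1)

/-- The value of a word in `M(G,X)`. -/
def repX (ι : X → G) : Word X → GraphX X G × G
  | [] => (gammaOneX, 1)
  | c :: w => mulMX (genX ι c) (repX ι w)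

theorem repX_snd (ι : X → G) (w : Word X) :
    (repX ι w).2 = evalWord ι (fun a => a⁻¹) w := by
  induction w with
  | nil => rfl
  | cons c w ih =>
    obtain ⟨x, b⟩ := c
    cases b <;> simp [repX, evalWord, mulMX, genX, invMX, ← ih]

theorem one_mem_repX (ι : X → G) (w : Word X) : (1 : G) ∈ (repX ι w).1.1 := by
  cases w with
  | nil => simp [repX, gammaOneX]
  | cons c w =>
    obtain ⟨x, b⟩ := c
    cases b <;> simp [repX, mulMX, gunionX, genX, invMX, gmulX, gammaXX]

theorem one_mulMX (p : GraphX X G × G) (h : (1 : G) ∈ p.1.1) :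
    mulMX (gammaOneX, 1) p = p := by
  obtain ⟨⟨V, E⟩, g⟩ := p
  simp only [mulMX, gmulX_one, one_mul, gunionX, gammaOneX, Set.empty_union, Prod.mk.injEq,
    and_true]
  exact Set.union_eq_right.2 (by simpa using h)

theorem mulMX_one (p : GraphX X G × G) (h : p.2 ∈ p.1.1) :
    mulMX p (gammaOneX, 1) = p := by
  obtain ⟨⟨V, E⟩, g⟩ := p
  simp only [mulMX, gmulX, mul_one, gunionX, gammaOneX, Set.image_empty, Set.union_empty,
    Set.image_singleton, Prod.mk.injEq, and_true]
  exact Set.union_eq_left.2 (by simpa using h)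

theorem repX_append (ι : X → G) (u v : Word X) :
    repX ι (u ++ v) = mulMX (repX ι u) (repX ι v) := by
  induction u with
  | nil => simp [repX, one_mulMX _ (one_mem_repX ι v)]
  | cons c u ih => simp [repX, ih, mulMX_assoc]

theorem repX_single (ι : X → G) (c : X × Bool) : repX ι [c] = genX ι c := by
  obtain ⟨x, b⟩ := c
  apply mulMX_one
  cases b <;> simp [genX, invMX, gmulX, gammaXX]

/-- The formal inverse of a word. -/
def invWord (w : Word X) : Word X := (w.map (fun c => (c.1, !c.2))).reverse

theorem repX_invWord (ι : X → G) (w : Word X) : repX ι (invWord w) = invMX (repX ι w) := by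
  induction w with
  | nil => simp [invWord, repX, invMX, gmulX_one]
  | cons c w ih =>
    have : invWord (c :: w) = invWord w ++ [(c.1, !c.2)] := by simp [invWord]
    rw [this, repX_append, ih, repX_single, repX, invMX_mulMX]
    congr 1
    obtain ⟨x, b⟩ := c
    cases b <;> simp [genX, invMX_invMX]

theorem evalWord_invWord {X S : Type*} [InverseMonoid S] (f : X → S) (w : Word X) :
    evalWord f (fun s => s⁻¹) (invWord w) = (evalWord f (fun s => s⁻¹) w)⁻¹ := by
  induction w with
  | nil => simp [invWord, evalWord, InverseMonoid.inv_of_idem (1 : S) (one_mul 1)]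
  | cons c w ih =>
    have : invWord (c :: w) = invWord w ++ [(c.1, !c.2)] := by simp [invWord]
    rw [this, evalWord_append, ih]
    obtain ⟨x, b⟩ := c
    cases b <;> simp [evalWord, InverseMonoid.mul_inv_rev, InverseMonoid.inv_inv]

/-- Every edge of the graph of a word is traversed by the word. -/
theorem edge_split (ι : X → G) (w : Word X) (a : G) (x : X) (h : (a, x) ∈ (repX ι w).1.2) :
    (∃ w1 w2, w = (w1 ++ [(x, true)]) ++ w2 ∧ evalWord ι (fun a => a⁻¹) w1 = a) ∨
    (∃ w1 w2, w = (w1 ++ [(x, false)]) ++ w2 ∧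
      evalWord ι (fun a => a⁻¹) w1 = a * ι x) := by
  induction w generalizing a with
  | nil => simp [repX, gammaOneX] at h
  | cons c w ih =>
    obtain ⟨y, b⟩ := c
    rcases h with h | h
    · cases b
      · right
        simp [genX, invMX, gmulX, gammaXX] at h
        obtain ⟨h1, rfl⟩ := h
        exact ⟨[], w, by simp, by simp [evalWord, h1]⟩
      · left
        simp [genX, gammaXX] at h
        obtain ⟨rfl, rfl⟩ := h
        exact ⟨[], w, by simp, by simp [evalWord]⟩
    · obtain ⟨⟨a', x'⟩, hm, he⟩ := h
      simp only [Prod.mk.injEq] at he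
      obtain ⟨rfl, rfl⟩ := he
      have hg : (genX ι (y, b)).2 = if b then ι y else (ι y)⁻¹ := by
        cases b <;> simp [genX, invMX]
      rcases ih a' hm with ⟨w1, w2, rfl, h1⟩ | ⟨w1, w2, rfl, h1⟩
      · exact Or.inl ⟨(y, b) :: w1, w2, by simp, by simp [evalWord, h1, hg]⟩
      · exact Or.inr ⟨(y, b) :: w1, w2, by simp, by simp [evalWord, h1, hg, mul_assoc]⟩

/-- If the edges of `u` are traversed by `w`, the idempotent of `w` is below that of `u`. -/
theorem idem_le {X G S : Type*} [Group G] [InverseMonoid S] (ι : X → G)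
    (hE : ∀ e s : S, e * e = e → nle e s → s * s = s) (ιS : X → S)
    (hcompat : ∀ u v : Word X,
      evalWord ι (fun a => a⁻¹) u = evalWord ι (fun a => a⁻¹) v →
      sigmaRel (evalWord ιS (fun s => s⁻¹) u) (evalWord ιS (fun s => s⁻¹) v))
    (w u : Word X) (hsub : (repX ι u).1.2 ⊆ (repX ι w).1.2) :
    (evalWord ιS (fun s => s⁻¹) w * (evalWord ιS (fun s => s⁻¹) w)⁻¹) *
      (evalWord ιS (fun s => s⁻¹) u * (evalWord ιS (fun s => s⁻¹) u)⁻¹) =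
    evalWord ιS (fun s => s⁻¹) w * (evalWord ιS (fun s => s⁻¹) w)⁻¹ := by
  set e := evalWord ιS (fun s => s⁻¹) w * (evalWord ιS (fun s => s⁻¹) w)⁻¹ with he
  have hee : e * e = e := InverseMonoid.idem_mul_inv _
  have hpre : ∀ w1 w2 : Word X, w = w1 ++ w2 →
      e * (evalWord ιS (fun s => s⁻¹) w1 * (evalWord ιS (fun s => s⁻¹) w1)⁻¹) = e := by
    intro w1 w2 hw
    rw [he, hw, evalWord_append]
    exact prefix_le _ _
  -- the range of `s * c`, restricted to `e`, only depends on `e * s`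
  have hext : ∀ s t c : S, e * s = e * t → e * ((t * c) * (t * c)⁻¹) = e →
      e * ((s * c) * (s * c)⁻¹) = e := by
    intro s t c hst ht
    have hform : ∀ r : S, e * ((r * c) * (r * c)⁻¹) = (e * r) * (c * c⁻¹) * (e * r)⁻¹ := by
      intro r
      have hc := InverseMonoid.idem_comm _ _ hee (InverseMonoid.idem_mul_inv (r * c))
      calc e * ((r * c) * (r * c)⁻¹) = e * e * ((r * c) * (r * c)⁻¹) := by rw [hee]
        _ = e * (((r * c) * (r * c)⁻¹) * e) := by rw [mul_assoc, hc]
        _ = _ := by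
          simp only [InverseMonoid.mul_inv_rev, InverseMonoid.inv_of_idem e hee, mul_assoc]
    rw [hform, hst, ← hform, ht]
  induction u using List.reverseRecOn with
  | nil =>
    simp [evalWord, InverseMonoid.inv_of_idem (1 : S) (one_mul 1)]
  | append_singleton u c ih =>
    rw [repX_append, repX_single] at hsub
    have ihu := ih (fun z hz => hsub (Or.inl hz))
    obtain ⟨x, b⟩ := c
    rw [evalWord_append]
    have hrestr : ∀ w1 w2 : Word X, w = w1 ++ w2 →
        evalWord ι (fun a => a⁻¹) u = evalWord ι (fun a => a⁻¹) w1 →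
        e * evalWord ιS (fun s => s⁻¹) u = e * evalWord ιS (fun s => s⁻¹) w1 := by
      intro w1 w2 hw hv
      exact restrict_eq hE e _ _ hee ihu (hpre w1 w2 hw) (hcompat _ _ hv)
    -- either the letter is read along `w`, or its inverse was just read
    have hcases : ∃ w1 w2 : Word X, w = w1 ++ w2 ∧
        evalWord ι (fun a => a⁻¹) u = evalWord ι (fun a => a⁻¹) w1 ∧
        ((∃ w3, w2 = (x, b) :: w3) ∨ (∃ w0, w1 = w0 ++ [(x, !b)])) := by
      cases b
      · have hmem : ((repX ι u).2 * (ι x)⁻¹, x) ∈ (repX ι w).1.2 := by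
          apply hsub
          right
          exact ⟨((ι x)⁻¹, x), by simp [genX, invMX, gmulX, gammaXX], rfl⟩
        rw [repX_snd] at hmem
        rcases edge_split ι w _ x hmem with ⟨w1, w2, hw, h1⟩ | ⟨w1, w2, hw, h1⟩
        · exact ⟨w1 ++ [(x, true)], w2, hw, by simp [evalWord_append, h1, evalWord],
            Or.inr ⟨w1, rfl⟩⟩
        · exact ⟨w1, (x, false) :: w2, by simp [hw], by simp [h1], Or.inl ⟨w2, rfl⟩⟩
      · have hmem : ((repX ι u).2, x) ∈ (repX ι w).1.2 := by
          apply hsub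
          right
          exact ⟨(1, x), by simp [genX, gammaXX], by simp⟩
        rw [repX_snd] at hmem
        rcases edge_split ι w _ x hmem with ⟨w1, w2, hw, h1⟩ | ⟨w1, w2, hw, h1⟩
        · exact ⟨w1, (x, true) :: w2, by simp [hw], by simp [h1], Or.inl ⟨w2, rfl⟩⟩
        · exact ⟨w1 ++ [(x, false)], w2, hw, by simp [evalWord_append, h1, evalWord],
            Or.inr ⟨w1, rfl⟩⟩
    obtain ⟨w1, w2, hw, hv, hor⟩ := hcases
    refine hext _ _ _ (hrestr w1 w2 hw hv) ?_
    rcases hor with ⟨w3, rfl⟩ | ⟨w0, rfl⟩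
    · rw [← evalWord_append]
      exact hpre (w1 ++ [(x, b)]) w3 (by simp [hw])
    · have h0 := hpre _ _ hw
      have hinv : evalWord ιS (fun s => s⁻¹) [(x, b)] =
          (evalWord ιS (fun s => s⁻¹) [(x, !b)])⁻¹ := by
        rw [← evalWord_invWord]; simp [invWord]
      rw [hinv]
      rw [evalWord_append] at h0 ⊢
      generalize evalWord ιS (fun s => s⁻¹) [(x, !b)] = d at *
      generalize evalWord ιS (fun s => s⁻¹) w0 = r at *
      have : r * d * d⁻¹ * (r * d * d⁻¹)⁻¹ = r * d * (r * d)⁻¹ := by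
        simp only [InverseMonoid.mul_inv_rev, InverseMonoid.inv_inv]
        calc r * d * d⁻¹ * (d * (d⁻¹ * r⁻¹)) = r * (d * d⁻¹ * d) * d⁻¹ * r⁻¹ := by
              simp only [mul_assoc]
          _ = _ := by rw [InverseMonoid.mul_inv_mul]; simp only [mul_assoc]
      rw [this, h0]

/-- The value in `S` of a word only depends on its value in `M(G,X)`. -/
theorem eval_eq {X G S : Type*} [Group G] [InverseMonoid S] (ι : X → G)
    (hE : ∀ e s : S, e * e = e → nle e s → s * s = s) (ιS : X → S)
    (hcompat : ∀ u v : Word X,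
      evalWord ι (fun a => a⁻¹) u = evalWord ι (fun a => a⁻¹) v →
      sigmaRel (evalWord ιS (fun s => s⁻¹) u) (evalWord ιS (fun s => s⁻¹) v))
    (u v : Word X) (h : repX ι u = repX ι v) :
    evalWord ιS (fun s => s⁻¹) u = evalWord ιS (fun s => s⁻¹) v := by
  have h1 := idem_le ι hE ιS hcompat u v (by rw [h])
  have h2 := idem_le ι hE ιS hcompat v u (by rw [h])
  have hs := hcompat u v (by rw [← repX_snd, h, repX_snd])
  have hc := InverseMonoid.idem_comm _ _
    (InverseMonoid.idem_mul_inv (evalWord ιS (fun s => s⁻¹) u))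
    (InverseMonoid.idem_mul_inv (evalWord ιS (fun s => s⁻¹) v))
  have heq := h1.symm.trans (hc.trans h2)
  have := restrict_eq hE _ _ _ (InverseMonoid.idem_mul_inv (evalWord ιS (fun s => s⁻¹) u))
    (InverseMonoid.idem_mul_inv _) h1 hs
  rwa [InverseMonoid.mul_inv_mul, heq, InverseMonoid.mul_inv_mul] at this

/-- In a subgraph, a word can be prolonged along any edge at its end. -/
theorem extend_edge (ι : X → G) (A : GraphX X G) (hA : IsSubgraphX ι A) (a : G) (x : X)
    (he : (a, x) ∈ A.2) :
    (∀ w, (repX ι w).1 ≤ A → (repX ι w).2 = a →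
      (repX ι (w ++ [(x, true)])).1 ≤ A ∧ (repX ι (w ++ [(x, true)])).2 = a * ι x ∧
      (a, x) ∈ (repX ι (w ++ [(x, true)])).1.2) ∧
    (∀ w, (repX ι w).1 ≤ A → (repX ι w).2 = a * ι x →
      (repX ι (w ++ [(x, false)])).1 ≤ A ∧ (repX ι (w ++ [(x, false)])).2 = a) := by
  obtain ⟨h1, h2⟩ := hA.2.2.2 _ he
  simp only at h1 h2
  constructor
  · intro w hw hwa
    rw [repX_append, repX_single]
    refine ⟨⟨?_, ?_⟩, ?_, ?_⟩
    · refine Set.union_subset hw.1 ?_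
      rintro _ ⟨z, hz, rfl⟩
      simp [genX, gammaXX] at hz
      rcases hz with rfl | rfl <;> simp [hwa, h1, h2]
    · refine Set.union_subset hw.2 ?_
      rintro _ ⟨z, hz, rfl⟩
      simp [genX, gammaXX] at hz
      subst hz
      simpa [hwa] using he
    · simp [mulMX, genX, hwa]
    · right
      exact ⟨(1, x), by simp [genX, gammaXX], by simp [hwa]⟩
  · intro w hw hwa
    rw [repX_append, repX_single]
    refine ⟨⟨?_, ?_⟩, ?_⟩
    · refine Set.union_subset hw.1 ?_
      rintro _ ⟨z, hz, rfl⟩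
      simp [genX, gammaXX, invMX, gmulX] at hz
      rcases hz with hz | rfl
      · simpa [hwa, mul_assoc, hz] using h1
      · simp [hwa, h2]
    · refine Set.union_subset hw.2 ?_
      rintro _ ⟨z, hz, rfl⟩
      simp [genX, gammaXX, invMX, gmulX] at hz
      subst hz
      simpa [hwa] using he
    · simp [mulMX, genX, hwa, invMX]

theorem exists_path (ι : X → G) (A : GraphX X G) (hA : A ∈ XXc ι) (v : G) (hv : v ∈ A.1) :
    ∃ w, (repX ι w).1 ≤ A ∧ (repX ι w).2 = v := by
  have key : ∀ a b, Relation.EqvGen (edgeRelX ι A) a b →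
      ((∃ w, (repX ι w).1 ≤ A ∧ (repX ι w).2 = a) ↔
        (∃ w, (repX ι w).1 ≤ A ∧ (repX ι w).2 = b)) := by
    intro a b hab
    induction hab with
    | rel a b h =>
      obtain ⟨x, he, rfl⟩ := h
      have := extend_edge ι A hA.1 a x he
      constructor
      · rintro ⟨w, hw, hwa⟩
        exact ⟨_, (this.1 w hw hwa).1, (this.1 w hw hwa).2.1⟩
      · rintro ⟨w, hw, hwa⟩
        exact ⟨_, this.2 w hw hwa⟩
    | refl => exact Iff.rfl
    | symm _ _ _ ih => exact ih.symm
    | trans _ _ _ _ _ ih1 ih2 => exact ih1.trans ih2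
  refine (key 1 v (hA.2 v hv)).1 ⟨[], ⟨?_, ?_⟩, rfl⟩
  · simpa [repX, gammaOneX] using hA.1.2.2.1
  · simp [repX, gammaOneX]

theorem mulMX_one_mem (ι : X → G) (u : Word X) :
    mulMX (repX ι u) (gammaOneX, 1) = repX ι u := by
  have := repX_append ι u []
  rw [List.append_nil] at this
  exact this.symm

/-- Combine two words: loop along the first, then follow the second. -/
theorem loop_then (ι : X → G) (u v : Word X) :
    repX ι ((u ++ invWord u) ++ v) = (gunionX (repX ι u).1 (repX ι v).1, (repX ι v).2) := by
  rw [repX_append, repX_append, repX_invWord, mulMX_invMX]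
  simp [mulMX, gmulX_one]

/-- Every element of `M(G,X)` is the value of a word. -/
theorem exists_word (ι : X → G) (p : GraphX X G × G) (hp : p ∈ MsetX ι) :
    ∃ w, repX ι w = p := by
  obtain ⟨A, g⟩ := p
  obtain ⟨hA, hg⟩ := hp
  simp only at hA hg
  have hV : ∀ V : Set G, V.Finite → V ⊆ A.1 →
      ∃ w, (repX ι w).1 ≤ A ∧ V ⊆ (repX ι w).1.1 ∧ (repX ι w).2 = g := by
    intro V hfin
    induction V, hfin using Set.Finite.induction_on with
    | empty =>
      intro _
      obtain ⟨w, h1, h2⟩ := exists_path ι A hA g hg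
      exact ⟨w, h1, by simp, h2⟩
    | @insert a V _ _ ih =>
      intro hsub
      obtain ⟨w, h1, h2, h3⟩ := ih (fun z hz => hsub (Or.inr hz))
      obtain ⟨u, h4, h5⟩ := exists_path ι A hA a (hsub (Or.inl rfl))
      refine ⟨(u ++ invWord u) ++ w, ?_⟩
      rw [loop_then]
      refine ⟨⟨Set.union_subset h4.1 h1.1, Set.union_subset h4.2 h1.2⟩, ?_, h3⟩
      refine Set.insert_subset (Or.inl ?_) (fun z hz => Or.inr (h2 hz))
      rw [← h5]
      have hmem : (repX ι u).2 ∈ (mulMX (repX ι u) (gammaOneX, 1)).1.1 :=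
        Or.inr ⟨1, by simp [gammaOneX], by simp⟩
      rwa [mulMX_one_mem] at hmem
  have hEd : ∀ F : Set (G × X), F.Finite → F ⊆ A.2 →
      ∃ w, (repX ι w).1 ≤ A ∧ A.1 ⊆ (repX ι w).1.1 ∧ F ⊆ (repX ι w).1.2 ∧
        (repX ι w).2 = g := by
    intro F hfin
    induction F, hfin using Set.Finite.induction_on with
    | empty =>
      intro _
      obtain ⟨w, h1, h2, h3⟩ := hV A.1 hA.1.1 subset_rfl
      exact ⟨w, h1, h2, by simp, h3⟩
    | @insert e F _ _ ih =>
      intro hsub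
      obtain ⟨w, h1, h2, h2', h3⟩ := ih (fun z hz => hsub (Or.inr hz))
      obtain ⟨a, x⟩ := e
      have he : (a, x) ∈ A.2 := hsub (Or.inl rfl)
      obtain ⟨u, h4, h5⟩ := exists_path ι A hA a (hA.1.2.2.2 _ he).1
      obtain ⟨h6, _, h7⟩ := (extend_edge ι A hA.1 a x he).1 u h4 h5
      refine ⟨((u ++ [(x, true)]) ++ invWord (u ++ [(x, true)])) ++ w, ?_⟩
      rw [loop_then]
      exact ⟨⟨Set.union_subset h6.1 h1.1, Set.union_subset h6.2 h1.2⟩,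
        fun z hz => Or.inr (h2 hz),
        Set.insert_subset (Or.inl h7) (fun z hz => Or.inr (h2' hz)), h3⟩
  obtain ⟨w, h1, h2, h3, h4⟩ := hEd A.2 hA.1.2.1 subset_rfl
  exact ⟨w, Prod.ext (le_antisymm h1 ⟨h2, h3⟩) h4⟩

end helpers

/-- universal property of `M(G,X)`.  Let `G` be an
`X`-generated group and `S` an `E`-unitary inverse monoid equipped with
`ι_S : X → S` generating `S` under multiplication and inversion, such that
words over `X ∪ X⁻¹` with equal values in `G` have `σ`-related values in `S`.
Then there is a monoid homomorphism `φ : M(G,X) → S` preserving inversion,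
sending `(Γ_x, [x])` to `ι_S x`, and such that `φ(A,g)` is `σ`-related to the
value in `S` of any word over `X ∪ X⁻¹` whose value in `G` is `g`. -/
theorem universal_property_MGX {X G S : Type*} [Nonempty X] [Group G]
    [InverseMonoid S] (ι : X → G)
    (hgen : Subgroup.closure (Set.range ι) = ⊤)
    -- `S` is `E`-unitary:
    (hEunit : ∀ e s : S, e * e = e → nle e s → s * s = s)
    (ιS : X → S)
    -- `S` is generated by `ι_S(X)` under multiplication and inversion:
    (hSgen : ∀ P : Set S, (1 : S) ∈ P → (∀ x : X, ιS x ∈ P) →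
      (∀ a b : S, a ∈ P → b ∈ P → a * b ∈ P) →
      (∀ a : S, a ∈ P → a⁻¹ ∈ P) → ∀ s : S, s ∈ P)
    -- words with equal values in `G` have `σ`-related values in `S`:
    (hcompat : ∀ u v : Word X,
      evalWord ι (fun a => a⁻¹) u = evalWord ι (fun a => a⁻¹) v →
      sigmaRel (evalWord ιS (fun s => s⁻¹) u) (evalWord ιS (fun s => s⁻¹) v)) :
    ∃ φ : GraphX X G × G → S,
      -- `φ` is a monoid homomorphism on `M(G,X)`
      φ ((gammaOneX, 1) : GraphX X G × G) = 1 ∧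
      (∀ p q : GraphX X G × G, p ∈ MsetX ι → q ∈ MsetX ι →
        φ (mulMX p q) = φ p * φ q) ∧
      -- `φ` preserves inversion
      (∀ p : GraphX X G × G, p ∈ MsetX ι → φ (invMX p) = (φ p)⁻¹) ∧
      -- `φ` sends the generator `(Γ_x, [x])` to `ι_S x`
      (∀ x : X, φ ((gammaXX ι x, ι x) : GraphX X G × G) = ιS x) ∧
      -- `φ(A,g)` is `σ`-related to `[w]_S` whenever `[w]_G = g`
      (∀ p : GraphX X G × G, p ∈ MsetX ι → ∀ w : Word X,
        evalWord ι (fun a => a⁻¹) w = p.2 →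
        sigmaRel (φ p) (evalWord ιS (fun s => s⁻¹) w)) := by
  classical
  let ψ : Word X → S := evalWord ιS (fun s => s⁻¹)
  have hwd : ∀ u v : Word X, repX ι u = repX ι v → ψ u = ψ v :=
    eval_eq ι hEunit ιS hcompat
  let φ : GraphX X G × G → S := fun p => if h : ∃ w, repX ι w = p then ψ h.choose else 1
  have hφ : ∀ w : Word X, φ (repX ι w) = ψ w := by
    intro w
    have h : ∃ w', repX ι w' = repX ι w := ⟨w, rfl⟩
    have : φ (repX ι w) = ψ h.choose := dif_pos h
    rw [this]
    exact hwd _ _ h.choose_spec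
  refine ⟨φ, hφ [], ?_, ?_, ?_, ?_⟩
  · intro p q hp hq
    obtain ⟨u, rfl⟩ := exists_word ι p hp
    obtain ⟨v, rfl⟩ := exists_word ι q hq
    rw [← repX_append, hφ, hφ, hφ]
    exact evalWord_append _ _ u v
  · intro p hp
    obtain ⟨u, rfl⟩ := exists_word ι p hp
    rw [← repX_invWord, hφ, hφ]
    exact evalWord_invWord _ u
  · intro x
    have h := hφ [(x, true)]
    rw [repX_single] at h
    simpa [genX, ψ, evalWord] using h
  · intro p hp w hw
    obtain ⟨u, rfl⟩ := exists_word ι p hp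
    rw [hφ]
    exact hcompat u w (by rw [hw, repX_snd])

end FInvPaper
end
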